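/- (One-dimensional marginal convergence in the light-tail case.) Let φ : ℕ → ℝ with φ_i ≥ 0, φ_0 = 0, ∑_{i=1}^∞ φ_i = 1, and assume m := ∑_{i=1}^∞ i φ_i < ∞. Let (a_n)_{n≥1} satisfy 0 < a_n < 1 and n(1−a_n) → λ for some λ > 0. Let (ε_k)_{k≥0} be iid real random variables with E[ε_0] = 0 and E[ε_0²] = 1, define y^n_0 = ε_0, y^n_k = ε_k + ∑_{i=1}^k a_n φ_i y^n_{k−i} for k ≥ 1, and set Z^n_t = ((1−a_n)/√n)(∑_{j=0}^{⌊nt⌋} y^n_j + (nt−⌊nt⌋) y^n_{⌊nt⌋+1}). Then for each fixed t ∈ [0,1], Z^n_t converges in distribution, as n → ∞, to a centered Gaussian random variable with variance ∫_0^t (1 − e^{−(λ/m)(t−s)})² ds. -/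

import Mathlib

open MeasureTheory ProbabilityTheory Filter Set

/-- Convolution powers of a sequence. -/
noncomputable def convPow (φ : ℕ → ℝ) : ℕ → ℕ → ℝ
  | 0 => fun i => if i = 0 then 1 else 0
  | (l + 1) => fun k => ∑ j ∈ Finset.range (k + 1), convPow φ l j * φ (k - j)

/-- ψ^a_i = ∑_{l=0}^∞ a^l (φ^{*l})_i. -/
noncomputable def psiSeq (a : ℝ) (φ : ℕ → ℝ) (i : ℕ) : ℝ :=
  ∑' l : ℕ, a ^ l * convPow φ l i

/-- Fourier transform of a sequence indexed by ℕ. -/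
noncomputable def fourierSeq (f : ℕ → ℝ) (z : ℝ) : ℂ :=
  ∑' k : ℕ, (f k : ℂ) * Complex.exp (-(2 * Real.pi * Complex.I * k * z))

/-- Mittag-Leffler function E_{α,α}. -/
noncomputable def mittagLeffler (α u : ℝ) : ℝ :=
  ∑' k : ℕ, u ^ k / Real.Gamma (α * k + α)

/-- f^{α,λ}. -/
noncomputable def mlDensity (α lam s : ℝ) : ℝ :=
  lam * s ^ (α - 1) * mittagLeffler α (-lam * s ^ α)

/-- F^{α,λ}. -/
noncomputable def mlCDF (α lam x : ℝ) : ℝ :=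
  ∫ s in (0:ℝ)..x, mlDensity α lam s

/-!
Put `ψ = ∑ₗ aₙˡ φ^{*l}`. Then `yⁿ = ψ * ε`, so `Zⁿ_t` is a weighted sum of the innovations, an
innovation of age `j` having weight `n^{-1/2} gₙ(j)`. Up to `1 - aₙ`, the function `gₙ` is the
distribution function of the probability vector `(1 - aₙ) ψ`, a geometric compound of `φ`. With its
atoms placed at `k / n`, this compound has characteristic function `(1 - aₙ) / (1 - aₙ χₙ)`, where
`χₙ` is that of `φ`. Since `n (1 - aₙ) → λ` and `n (χₙ(u) - 1) → i m u`, the quotient converges to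
`λ / (λ - i m u)`: the rescaled compound is asymptotically exponential with rate `λ / m`, and hence
`gₙ(⌊n s⌋) → 1 - e^{-(λ/m) s}`. The sum of the squared weights is therefore a Riemann sum that
converges by dominated convergence, and a central limit theorem for uniformly small weights applies.
-/

open scoped Topology

section Resolvent

lemma convPow_eq_coeff (φ : ℕ → ℝ) (l k : ℕ) :
    convPow φ l k = PowerSeries.coeff k (PowerSeries.mk φ ^ l) := by
  induction l generalizing k with
  | zero => simp [convPow, PowerSeries.coeff_one]
  | succ l ih =>
    rw [pow_succ, PowerSeries.coeff_mul, Finset.Nat.sum_antidiagonal_eq_sum_range_succ_mk]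
    simp [convPow, ih]

lemma convPow_nonneg {φ : ℕ → ℝ} (hφ : ∀ i, 0 ≤ φ i) (l k : ℕ) : 0 ≤ convPow φ l k := by
  induction l generalizing k with
  | zero => simp only [convPow]; positivity
  | succ l ih => exact Finset.sum_nonneg fun j _ ↦ mul_nonneg (ih j) (hφ _)

lemma convPow_eq_zero_of_lt {φ : ℕ → ℝ} (hφ₀ : φ 0 = 0) {l k : ℕ} (hkl : k < l) :
    convPow φ l k = 0 := by
  have hX : PowerSeries.X ∣ PowerSeries.mk φ := by simp [PowerSeries.X_dvd_iff, hφ₀]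
  rw [convPow_eq_coeff]
  exact PowerSeries.X_pow_dvd_iff.mp (pow_dvd_pow_of_dvd hX l) k hkl

variable {a : ℝ} {φ : ℕ → ℝ}

lemma psiSeq_nonneg (ha : 0 ≤ a) (hφ : ∀ i, 0 ≤ φ i) (k : ℕ) : 0 ≤ psiSeq a φ k :=
  tsum_nonneg fun l ↦ mul_nonneg (pow_nonneg ha l) (convPow_nonneg hφ l k)

lemma psiSeq_eq_sum_range (hφ₀ : φ 0 = 0) {k N : ℕ} (hkN : k < N) :
    psiSeq a φ k = ∑ l ∈ Finset.range N, a ^ l * convPow φ l k := by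
  refine tsum_eq_sum fun l hl ↦ ?_
  rw [convPow_eq_zero_of_lt hφ₀ (by grind), mul_zero]

lemma psiSeq_renewal (hφ₀ : φ 0 = 0) (k : ℕ) :
    psiSeq a φ k = (if k = 0 then 1 else 0) +
      a * ∑ j ∈ Finset.range (k + 1), psiSeq a φ j * φ (k - j) := by
  rw [psiSeq_eq_sum_range hφ₀ (by omega : k < k + 2), Finset.sum_range_succ', add_comm]
  congr 1
  · simp [convPow]
  · have hconv : ∀ j ∈ Finset.range (k + 1), psiSeq a φ j * φ (k - j) =
        ∑ l ∈ Finset.range (k + 1), a ^ l * (convPow φ l j * φ (k - j)) := fun j hj ↦ by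
      rw [psiSeq_eq_sum_range hφ₀ (Finset.mem_range.mp hj), Finset.sum_mul]
      simp only [mul_assoc]
    rw [Finset.sum_congr rfl hconv, Finset.sum_comm, Finset.mul_sum]
    simp only [convPow, Finset.mul_sum]
    refine Finset.sum_congr rfl fun l _ ↦ Finset.sum_congr rfl fun j _ ↦ by ring

lemma mk_psiSeq_mul_one_sub (hφ₀ : φ 0 = 0) :
    PowerSeries.mk (psiSeq a φ) * (1 - PowerSeries.C a * PowerSeries.mk φ) = 1 := by
  have hrenewal : PowerSeries.mk (psiSeq a φ) =
      1 + PowerSeries.C a * (PowerSeries.mk (psiSeq a φ) * PowerSeries.mk φ) := by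
    ext k
    rw [PowerSeries.coeff_mk, psiSeq_renewal hφ₀, map_add, PowerSeries.coeff_C_mul,
      PowerSeries.coeff_mul, Finset.Nat.sum_antidiagonal_eq_sum_range_succ_mk]
    simp [PowerSeries.coeff_one]
  linear_combination hrenewal

lemma eq_sum_mul_psiSeq_of_recurrence (hφ₀ : φ 0 = 0) {e y : ℕ → ℝ} (hy₀ : y 0 = e 0)
    (hy : ∀ k, 1 ≤ k → y k = e k + ∑ i ∈ Finset.Icc 1 k, a * φ i * y (k - i)) (k : ℕ) :
    y k = ∑ j ∈ Finset.range (k + 1), e j * psiSeq a φ (k - j) := by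
  have hrec : PowerSeries.mk y * (1 - PowerSeries.C a * PowerSeries.mk φ) = PowerSeries.mk e := by
    suffices PowerSeries.mk y =
        PowerSeries.mk e + PowerSeries.C a * (PowerSeries.mk φ * PowerSeries.mk y) by
      linear_combination this
    ext k
    rw [map_add, PowerSeries.coeff_C_mul, PowerSeries.coeff_mul,
      Finset.Nat.sum_antidiagonal_eq_sum_range_succ_mk]
    rcases k.eq_zero_or_pos with rfl | hk
    · simp [hφ₀, hy₀]
    · have : Finset.Icc 1 k = Finset.Ico 1 (k + 1) := by grind
      rw [Finset.range_eq_Ico, Finset.sum_eq_sum_Ico_succ_bot k.succ_pos]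
      simp [hy k hk, hφ₀, this, Finset.mul_sum, mul_assoc]
  have hsol : PowerSeries.mk y = PowerSeries.mk e * PowerSeries.mk (psiSeq a φ) := by
    rw [← hrec, mul_assoc, mul_comm (1 - _), mk_psiSeq_mul_one_sub hφ₀, mul_one]
  simpa [PowerSeries.coeff_mul, Finset.Nat.sum_antidiagonal_eq_sum_range_succ_mk] using
    congr(PowerSeries.coeff k $hsol)

lemma psiSeq_le_one (ha₀ : 0 ≤ a) (ha₁ : a ≤ 1) (hφ : ∀ i, 0 ≤ φ i) (hφ₀ : φ 0 = 0)
    (hφs : HasSum φ 1) (k : ℕ) : psiSeq a φ k ≤ 1 := by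
  induction k using Nat.strong_induction_on with
  | _ k ih =>
  rw [psiSeq_renewal hφ₀, Finset.sum_range_succ, Nat.sub_self, hφ₀, mul_zero, add_zero]
  rcases k.eq_zero_or_pos with rfl | hk
  · simp
  · have hsum : ∑ j ∈ Finset.range k, psiSeq a φ j * φ (k - j) ≤ 1 :=
      calc ∑ j ∈ Finset.range k, psiSeq a φ j * φ (k - j)
          ≤ ∑ j ∈ Finset.range k, φ (k - j) := Finset.sum_le_sum fun j hj ↦
            mul_le_of_le_one_left (hφ _) (ih j (Finset.mem_range.mp hj))
        _ ≤ ∑ j ∈ Finset.range (k + 1), φ (k - j) :=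
            Finset.sum_le_sum_of_subset_of_nonneg (by simp) fun j _ _ ↦ hφ _
        _ = ∑ j ∈ Finset.range (k + 1), φ j := Finset.sum_range_reflect φ (k + 1)
        _ ≤ 1 := sum_le_hasSum _ (fun j _ ↦ hφ j) hφs
    have hsum₀ : 0 ≤ ∑ j ∈ Finset.range k, psiSeq a φ j * φ (k - j) :=
      Finset.sum_nonneg fun j _ ↦ mul_nonneg (psiSeq_nonneg ha₀ hφ j) (hφ _)
    simpa [hk.ne'] using mul_le_one₀ ha₁ hsum₀ hsum

lemma one_sub_mul_sum_psiSeq_le_one (ha : 0 ≤ a) (hφ : ∀ i, 0 ≤ φ i) (hφ₀ : φ 0 = 0)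
    (hφs : HasSum φ 1) (N : ℕ) : (1 - a) * ∑ k ∈ Finset.range N, psiSeq a φ k ≤ 1 := by
  have hone : ∑ k ∈ Finset.range N, (if k = 0 then 1 else 0 : ℝ) ≤ 1 := by
    rw [Finset.sum_ite_eq']
    split_ifs <;> norm_num
  have hconv : ∑ k ∈ Finset.range N, ∑ j ∈ Finset.range (k + 1), psiSeq a φ j * φ (k - j) ≤
      ∑ k ∈ Finset.range N, psiSeq a φ k := by
    rw [Finset.sum_range_diag_flip N fun j i ↦ psiSeq a φ j * φ i]
    refine Finset.sum_le_sum fun j _ ↦ ?_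
    rw [← Finset.mul_sum]
    exact mul_le_of_le_one_right (psiSeq_nonneg ha hφ j) (sum_le_hasSum _ (fun i _ ↦ hφ i) hφs)
  have hrenewal : ∑ k ∈ Finset.range N, psiSeq a φ k =
      ∑ k ∈ Finset.range N, (if k = 0 then 1 else 0 : ℝ) +
        a * ∑ k ∈ Finset.range N, ∑ j ∈ Finset.range (k + 1), psiSeq a φ j * φ (k - j) := by
    rw [Finset.mul_sum, ← Finset.sum_add_distrib]
    exact Finset.sum_congr rfl fun k _ ↦ psiSeq_renewal hφ₀ k
  nlinarith [mul_le_mul_of_nonneg_left hconv ha]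

lemma summable_psiSeq (ha₀ : 0 ≤ a) (ha₁ : a < 1) (hφ : ∀ i, 0 ≤ φ i) (hφ₀ : φ 0 = 0)
    (hφs : HasSum φ 1) : Summable (psiSeq a φ) :=
  summable_of_sum_range_le (psiSeq_nonneg ha₀ hφ) fun N ↦ (le_div_iff₀' (sub_pos.mpr ha₁)).mpr
    (one_sub_mul_sum_psiSeq_le_one ha₀ hφ hφ₀ hφs N)

/-- The coefficient of an innovation of age `j` in `(1 - a) (∑_{i ≤ N} y_i + θ y_{N+1})`, the
interpolated sum of an autoregression with coefficients `a φ`; ages count from time `N + 1`. -/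
noncomputable def donskerWeight (a : ℝ) (φ : ℕ → ℝ) (θ : ℝ) (j : ℕ) : ℝ :=
  (1 - a) * (∑ i ∈ Finset.range j, psiSeq a φ i + θ * psiSeq a φ j)

lemma interpolated_sum_eq_sum_donskerWeight (hφ₀ : φ 0 = 0) {e y : ℕ → ℝ} (hy₀ : y 0 = e 0)
    (hy : ∀ k, 1 ≤ k → y k = e k + ∑ i ∈ Finset.Icc 1 k, a * φ i * y (k - i)) (θ : ℝ) (N : ℕ) :
    (1 - a) * (∑ j ∈ Finset.range (N + 1), y j + θ * y (N + 1)) =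
      ∑ k ∈ Finset.range (N + 2), donskerWeight a φ θ (N + 1 - k) * e k := by
  have hsum : ∑ j ∈ Finset.range (N + 1), y j =
      ∑ k ∈ Finset.range (N + 2), e k * ∑ i ∈ Finset.range (N + 1 - k), psiSeq a φ i := by
    simp only [eq_sum_mul_psiSeq_of_recurrence hφ₀ hy₀ hy, Finset.mul_sum]
    rw [Finset.sum_range_diag_flip (N + 1) fun k i ↦ e k * psiSeq a φ i]
    simp [Finset.sum_range_succ _ (N + 1)]
  rw [hsum, eq_sum_mul_psiSeq_of_recurrence hφ₀ hy₀ hy, Finset.mul_sum, ← Finset.sum_add_distrib,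
    Finset.mul_sum]
  refine Finset.sum_congr rfl fun k _ ↦ ?_
  rw [donskerWeight]
  ring

variable {θ : ℝ}

lemma donskerWeight_nonneg (ha₀ : 0 ≤ a) (ha₁ : a ≤ 1) (hφ : ∀ i, 0 ≤ φ i) (hθ : 0 ≤ θ) (j : ℕ) :
    0 ≤ donskerWeight a φ θ j :=
  have hψ := psiSeq_nonneg ha₀ hφ
  mul_nonneg (sub_nonneg.mpr ha₁)
    (add_nonneg (Finset.sum_nonneg fun i _ ↦ hψ i) (mul_nonneg hθ (hψ j)))

lemma donskerWeight_le_one (ha₀ : 0 ≤ a) (ha₁ : a ≤ 1) (hφ : ∀ i, 0 ≤ φ i) (hφ₀ : φ 0 = 0)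
    (hφs : HasSum φ 1) (hθ : θ ≤ 1) (j : ℕ) : donskerWeight a φ θ j ≤ 1 := by
  refine le_trans ?_ (one_sub_mul_sum_psiSeq_le_one ha₀ hφ hφ₀ hφs (j + 1))
  rw [donskerWeight, Finset.sum_range_succ]
  have := sub_nonneg.mpr ha₁
  gcongr
  exact mul_le_of_le_one_left (psiSeq_nonneg ha₀ hφ j) hθ

lemma abs_donskerWeight_sub_le (ha₀ : 0 ≤ a) (ha₁ : a ≤ 1) (hφ : ∀ i, 0 ≤ φ i) (hφ₀ : φ 0 = 0)
    (hφs : HasSum φ 1) (hθ : θ ∈ Icc 0 1) (j : ℕ) :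
    |donskerWeight a φ θ j - ∑ i ∈ Finset.range (j + 1), (1 - a) * psiSeq a φ i| ≤ 1 - a := by
  have hψ₀ := psiSeq_nonneg ha₀ hφ j
  have hψ₁ := psiSeq_le_one ha₀ ha₁ hφ hφ₀ hφs j
  have hdiff : donskerWeight a φ θ j - ∑ i ∈ Finset.range (j + 1), (1 - a) * psiSeq a φ i =
      -((1 - a) * ((1 - θ) * psiSeq a φ j)) := by
    rw [donskerWeight, ← Finset.mul_sum, Finset.sum_range_succ]
    ring
  have ha : 0 ≤ 1 - a := sub_nonneg.mpr ha₁
  have hθ' : 0 ≤ 1 - θ := sub_nonneg.mpr hθ.2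
  rw [hdiff, abs_neg, abs_of_nonneg (by positivity)]
  exact mul_le_of_le_one_right ha (mul_le_one₀ (sub_le_self 1 hθ.1) hψ₀ hψ₁)

end Resolvent

section Fourier

lemma norm_mul_exp_fourier (r : ℝ) (k : ℕ) (z : ℝ) :
    ‖(r : ℂ) * Complex.exp (-(2 * Real.pi * Complex.I * k * z))‖ = |r| := by
  rw [show -(2 * Real.pi * Complex.I * k * z) = ((-(2 * Real.pi * k * z) : ℝ) : ℂ) * Complex.I by
    push_cast; ring, norm_mul, Complex.norm_exp_ofReal_mul_I, mul_one, Complex.norm_real,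
    Real.norm_eq_abs]

lemma summable_norm_fourier {f : ℕ → ℝ} (hf : Summable f) (z : ℝ) :
    Summable fun k : ℕ ↦ ‖(f k : ℂ) * Complex.exp (-(2 * Real.pi * Complex.I * k * z))‖ := by
  simpa only [norm_mul_exp_fourier] using hf.abs

lemma fourierSeq_mul {f g : ℕ → ℝ} (hf : Summable f) (hg : Summable g) (z : ℝ) :
    fourierSeq f z * fourierSeq g z =
      fourierSeq (fun k ↦ ∑ j ∈ Finset.range (k + 1), f j * g (k - j)) z := by
  rw [fourierSeq, fourierSeq, tsum_mul_tsum_eq_tsum_sum_range_of_summable_norm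
    (summable_norm_fourier hf z) (summable_norm_fourier hg z), fourierSeq]
  refine tsum_congr fun k ↦ ?_
  push_cast
  rw [Finset.sum_mul]
  refine Finset.sum_congr rfl fun j hj ↦ ?_
  rw [mul_mul_mul_comm, ← Complex.exp_add, Nat.cast_sub (Finset.mem_range_succ_iff.mp hj)]
  ring_nf

lemma fourierSeq_psiSeq {a : ℝ} {φ : ℕ → ℝ} (ha₀ : 0 ≤ a) (ha₁ : a < 1) (hφ : ∀ i, 0 ≤ φ i)
    (hφ₀ : φ 0 = 0) (hφs : HasSum φ 1) (z : ℝ) :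
    fourierSeq (psiSeq a φ) z = (1 - a * fourierSeq φ z)⁻¹ := by
  have hψ := summable_psiSeq ha₀ ha₁ hφ hφ₀ hφs
  have hconv : Summable fun k ↦ ∑ j ∈ Finset.range (k + 1), psiSeq a φ j * φ (k - j) :=
    (summable_norm_sum_mul_range_of_summable_norm hψ.norm hφs.summable.norm).of_norm
  have hrenewal : fourierSeq (psiSeq a φ) z =
      1 + a * (fourierSeq (psiSeq a φ) z * fourierSeq φ z) := by
    rw [fourierSeq_mul hψ hφs.summable, fourierSeq, fourierSeq, ← tsum_mul_left,
      ← tsum_ite_eq 0 (fun _ ↦ (1 : ℂ)), ← Summable.tsum_add (hasSum_ite_eq 0 (1 : ℂ)).summable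
      ((summable_norm_fourier hconv z).of_norm.mul_left _)]
    refine tsum_congr fun k ↦ ?_
    rw [psiSeq_renewal hφ₀ k]
    rcases eq_or_ne k 0 with rfl | hk
    · simp
    · simp [hk, mul_assoc]
  exact eq_inv_of_mul_eq_one_left (by linear_combination hrenewal)

lemma fourierSeq_zero {f : ℕ → ℝ} : fourierSeq f 0 = ((∑' k, f k : ℝ) : ℂ) := by
  simp [fourierSeq, Complex.ofReal_tsum]

lemma fourierSeq_const_mul (c : ℝ) (f : ℕ → ℝ) (z : ℝ) :
    fourierSeq (fun k ↦ c * f k) z = c * fourierSeq f z := by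
  simp only [fourierSeq, Complex.ofReal_mul, mul_assoc, tsum_mul_left]

lemma hasSum_one_sub_mul_psiSeq {a : ℝ} {φ : ℕ → ℝ} (ha₀ : 0 ≤ a) (ha₁ : a < 1)
    (hφ : ∀ i, 0 ≤ φ i) (hφ₀ : φ 0 = 0) (hφs : HasSum φ 1) :
    HasSum (fun k ↦ (1 - a) * psiSeq a φ k) 1 := by
  have hψ := summable_psiSeq ha₀ ha₁ hφ hφ₀ hφs
  have htsum : (∑' k, psiSeq a φ k : ℝ) = (1 - a)⁻¹ := by
    have := fourierSeq_psiSeq ha₀ ha₁ hφ hφ₀ hφs 0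
    rw [fourierSeq_zero, fourierSeq_zero, hφs.tsum_eq] at this
    rw [Complex.ofReal_one, mul_one] at this
    exact_mod_cast this
  simpa only [htsum, mul_inv_cancel₀ (sub_pos.mpr ha₁).ne'] using hψ.hasSum.mul_left (1 - a)

lemma hasDerivAt_fourierSeq_zero {f : ℕ → ℝ} (hf : Summable f) {m : ℝ}
    (hm : HasSum (fun k : ℕ ↦ k * f k) m) :
    HasDerivAt (fourierSeq f) (-(2 * Real.pi * Complex.I * m)) 0 := by
  have hterm (k : ℕ) (z : ℝ) : HasDerivAt
      (fun z : ℝ ↦ (f k : ℂ) * Complex.exp (-(2 * Real.pi * Complex.I * k * z)))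
      (-(2 * Real.pi * Complex.I) *
        (((k * f k : ℝ) : ℂ) * Complex.exp (-(2 * Real.pi * Complex.I * k * z)))) z := by
    have hlin : HasDerivAt (fun z : ℝ ↦ -(2 * Real.pi * Complex.I * k * (z : ℂ)))
        (-(2 * Real.pi * Complex.I * k)) z := by
      simpa using (Complex.ofRealCLM.hasDerivAt.const_mul (2 * Real.pi * Complex.I * k)).fun_neg
    convert! (hlin.cexp.const_mul (f k : ℂ)) using 1
    push_cast
    ring
  have htsum := hasDerivAt_tsum (hm.summable.abs.mul_left (2 * Real.pi)) hterm
    (fun k z ↦ le_of_eq ?_) (summable_norm_fourier hf 0).of_norm 0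
  · convert! htsum using 1
    simp only [Complex.ofReal_zero, mul_zero, neg_zero, Complex.exp_zero, mul_one, tsum_mul_left,
      (Complex.hasSum_ofReal.mpr hm).tsum_eq]
    ring
  · rw [norm_mul, norm_mul_exp_fourier]
    simp [abs_of_pos Real.pi_pos]

lemma tendsto_one_of_tendsto_mul_one_sub {a : ℕ → ℝ} {lam : ℝ}
    (hlam : Tendsto (fun n : ℕ ↦ n * (1 - a n)) atTop (𝓝 lam)) : Tendsto a atTop (𝓝 1) := by
  have hdiv : Tendsto (fun n : ℕ ↦ 1 - n * (1 - a n) / n) atTop (𝓝 (1 - 0)) :=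
    tendsto_const_nhds.sub (hlam.div_atTop tendsto_natCast_atTop_atTop)
  rw [sub_zero] at hdiv
  refine hdiv.congr' ?_
  filter_upwards [eventually_ne_atTop 0] with n hn
  field_simp
  ring

lemma tendsto_mul_one_sub_fourierSeq {φ : ℕ → ℝ} (hφs : HasSum φ 1) {m : ℝ}
    (hm : HasSum (fun k : ℕ ↦ k * φ k) m) {a : ℕ → ℝ} {lam : ℝ}
    (hlam : Tendsto (fun n : ℕ ↦ n * (1 - a n)) atTop (𝓝 lam)) (u : ℝ) :
    Tendsto (fun n : ℕ ↦ n * (1 - a n * fourierSeq φ (-(u / (2 * Real.pi * n))))) atTop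
      (𝓝 (lam - m * u * Complex.I)) := by
  have hderiv : Tendsto (fun n : ℕ ↦ n * (fourierSeq φ (-(u / (2 * Real.pi * n))) - 1)) atTop
      (𝓝 (m * u * Complex.I)) := by
    have hlim := ((hasDerivAt_fourierSeq_zero hφs.summable hm).hasFDerivAt.lim_real
      (-(u / (2 * Real.pi)))).comp (tendsto_natCast_atTop_atTop (R := ℝ))
    convert! hlim using 2
    · simp only [Function.comp_apply, zero_add, fourierSeq_zero, hφs.tsum_eq, smul_eq_mul,
        Complex.real_smul, Complex.ofReal_natCast, Complex.ofReal_one]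
      congr 4
      field_simp
    · simp only [ContinuousLinearMap.toSpanSingleton_apply, smul_neg, neg_smul, Complex.real_smul,
        Complex.ofReal_div, Complex.ofReal_mul, Complex.ofReal_ofNat, neg_neg]
      field_simp
  have ha := (Complex.continuous_ofReal.tendsto 1).comp (tendsto_one_of_tendsto_mul_one_sub hlam)
  have hlam' := (Complex.continuous_ofReal.tendsto lam).comp hlam
  convert! hlam'.sub (ha.mul hderiv) using 2
  · simp only [Function.comp_apply, Complex.ofReal_mul, Complex.ofReal_natCast, Complex.ofReal_sub,
      Complex.ofReal_one]
    ring
  · simp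

end Fourier

section LatticeLaw

/-- The law `∑ k, p k • δ_{k / n}` on the lattice `n⁻¹ ℕ` with masses `p`; negative masses are
truncated to `0`. -/
noncomputable def latticeLaw (p : ℕ → ℝ) (n : ℕ) : Measure ℝ :=
  Measure.sum fun k : ℕ ↦ ENNReal.ofReal (p k) • Measure.dirac (k / n : ℝ)

variable {p : ℕ → ℝ}

lemma isProbabilityMeasure_latticeLaw (hp : ∀ k, 0 ≤ p k) (hp₁ : HasSum p 1) (n : ℕ) :
    IsProbabilityMeasure (latticeLaw p n) where
  measure_univ := by
    simp [latticeLaw, ← ENNReal.ofReal_tsum_of_nonneg hp hp₁.summable, hp₁.tsum_eq]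

lemma charFun_latticeLaw (hp : ∀ k, 0 ≤ p k) (n : ℕ) (u : ℝ) :
    charFun (latticeLaw p n) u = fourierSeq p (-(u / (2 * Real.pi * n))) := by
  have hterm (k : ℕ) : Complex.exp (u * (k / n : ℝ) * Complex.I) =
      Complex.exp (-(2 * Real.pi * Complex.I * k * ((-(u / (2 * Real.pi * n)) : ℝ) : ℂ))) := by
    congr 1
    push_cast
    have : (Real.pi : ℂ) ≠ 0 := by exact_mod_cast Real.pi_ne_zero
    field_simp
  rw [charFun_apply_real, latticeLaw, integral_sum_dirac (fun _ ↦ ENNReal.ofReal_ne_top),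
    fourierSeq]
  refine tsum_congr fun k ↦ ?_
  rw [ENNReal.toReal_ofReal (hp k), hterm, Complex.real_smul]

lemma latticeLaw_real_Iic (hp : ∀ k, 0 ≤ p k) {n : ℕ} (hn : 0 < n) {x : ℝ} (hx : 0 ≤ x) :
    (latticeLaw p n).real (Iic x) = ∑ k ∈ Finset.range (⌊n * x⌋₊ + 1), p k := by
  have hmem (k : ℕ) : (k / n : ℝ) ∈ Iic x ↔ k ∈ Finset.range (⌊n * x⌋₊ + 1) := by
    rw [mem_Iic, div_le_iff₀' (by positivity), Finset.mem_range_succ_iff, Nat.le_floor_iff]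
    positivity
  have hmass (k : ℕ) : (ENNReal.ofReal (p k) • Measure.dirac (k / n : ℝ)) (Iic x) =
      if k ∈ Finset.range (⌊n * x⌋₊ + 1) then ENNReal.ofReal (p k) else 0 := by
    simp only [Measure.smul_apply, Measure.dirac_apply' _ measurableSet_Iic, indicator_apply, hmem,
      Pi.one_apply, smul_eq_mul, mul_ite, mul_one, mul_zero]
  rw [measureReal_def, latticeLaw, Measure.sum_apply _ measurableSet_Iic]
  simp only [hmass]
  rw [tsum_eq_sum fun k hk ↦ if_neg hk, Finset.sum_congr rfl fun k hk ↦ if_pos hk,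
    ← ENNReal.ofReal_sum_of_nonneg fun k _ ↦ hp k,
    ENNReal.toReal_ofReal (Finset.sum_nonneg fun k _ ↦ hp k)]

lemma integral_expMeasure {E : Type*} [NormedAddCommGroup E] [NormedSpace ℝ E] {r : ℝ}
    (hr : 0 < r) (f : ℝ → E) :
    ∫ x, f x ∂expMeasure r = ∫ x in Ioi 0, (r * Real.exp (-(r * x))) • f x := by
  have hpdf (x : ℝ) : (exponentialPDF r x).toReal • f x =
      (Ici 0).indicator (fun x ↦ (r * Real.exp (-(r * x))) • f x) x := by
    by_cases hx : 0 ≤ x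
    · rw [exponentialPDF_of_nonneg hx, ENNReal.toReal_ofReal (by positivity),
        indicator_of_mem (mem_Ici.mpr hx)]
    · simp [exponentialPDF_of_neg (not_le.mp hx), hx]
  calc ∫ x, f x ∂expMeasure r = ∫ x, (exponentialPDF r x).toReal • f x :=
        integral_withDensity_eq_integral_toReal_smul
          (measurable_exponentialPDFReal r).ennreal_ofReal
          (.of_forall fun _ ↦ ENNReal.ofReal_lt_top) f
    _ = ∫ x in Ioi 0, (r * Real.exp (-(r * x))) • f x := by
        simp only [hpdf]
        rw [integral_indicator measurableSet_Ici, integral_Ici_eq_integral_Ioi]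

lemma charFun_expMeasure {r : ℝ} (hr : 0 < r) (u : ℝ) :
    charFun (expMeasure r) u = r / (r - u * Complex.I) := by
  have hre : (u * Complex.I - r).re < 0 := by simpa using hr
  calc charFun (expMeasure r) u
      = ∫ x : ℝ in Ioi 0, r * Complex.exp ((u * Complex.I - r) * x) := by
        rw [charFun_apply_real, integral_expMeasure hr]
        congr with x
        rw [Complex.real_smul, Complex.ofReal_mul, mul_assoc, Complex.ofReal_exp, ← Complex.exp_add]
        push_cast
        ring_nf
    _ = r / (r - u * Complex.I) := by
        rw [integral_const_mul, integral_exp_mul_complex_Ioi hre, ← neg_sub (u * Complex.I),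
          div_neg]
        simp [div_eq_mul_inv]

end LatticeLaw

section RiemannSums

lemma measurable_comp_floor_mul (h : ℕ → ℝ) (n : ℕ) : Measurable fun s : ℝ ↦ h ⌊n * s⌋₊ :=
  measurable_from_nat.comp (Nat.measurable_floor.comp (measurable_const_mul _))

lemma sum_range_div_eq_integral_floor (h : ℕ → ℝ) {n : ℕ} (hn : 0 < n) (M : ℕ) :
    (∑ j ∈ Finset.range M, h j) / n = ∫ s in 0..(M / n : ℝ), h ⌊n * s⌋₊ := by
  have hn' : (0 : ℝ) < n := by exact_mod_cast hn
  have hle (j : ℕ) : (j / n : ℝ) ≤ (j + 1 : ℕ) / n := by gcongr; simp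
  have hfloor (j : ℕ) : EqOn (fun s : ℝ ↦ h ⌊n * s⌋₊) (fun _ ↦ h j)
      (uIoo (j / n : ℝ) ((j + 1 : ℕ) / n)) := fun s hs ↦ by
    obtain ⟨hs₁, hs₂⟩ := uIoo_of_le (hle j) ▸ hs
    rw [div_lt_iff₀' hn'] at hs₁
    rw [lt_div_iff₀' hn'] at hs₂
    exact congrArg h ((Nat.floor_eq_iff (j.cast_nonneg.trans hs₁.le)).mpr
      ⟨hs₁.le, by exact_mod_cast hs₂⟩)
  have hcell (j : ℕ) : ∫ s in (j / n : ℝ)..((j + 1 : ℕ) / n : ℝ), h ⌊n * s⌋₊ = h j / n := by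
    rw [intervalIntegral.integral_congr_uIoo (hfloor j), intervalIntegral.integral_const,
      ← sub_div, Nat.cast_succ, add_sub_cancel_left, smul_eq_mul, one_div_mul_eq_div]
  calc (∑ j ∈ Finset.range M, h j) / n
      = ∑ j ∈ Finset.range M, ∫ s in (j / n : ℝ)..((j + 1 : ℕ) / n : ℝ), h ⌊n * s⌋₊ := by
        simp only [hcell, Finset.sum_div]
    _ = ∫ s in ((0 : ℕ) / n : ℝ)..(M / n : ℝ), h ⌊n * s⌋₊ :=
        intervalIntegral.sum_integral_adjacent_intervals (a := fun j : ℕ ↦ (j / n : ℝ))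
          fun j _ ↦ intervalIntegrable_const.congr_uIoo (hfloor j).symm
    _ = ∫ s in 0..(M / n : ℝ), h ⌊n * s⌋₊ := by rw [Nat.cast_zero, zero_div]

lemma tendsto_sum_range_div_integral {h : ℕ → ℕ → ℝ} {C : ℝ}
    (hC : ∀ᶠ n in atTop, ∀ j, |h n j| ≤ C) {H : ℝ → ℝ}
    (hH : ∀ s : ℝ, 0 ≤ s → Tendsto (fun n : ℕ ↦ h n ⌊n * s⌋₊) atTop (𝓝 (H s))) {M : ℕ → ℕ} {t : ℝ}
    (hM : Tendsto (fun n ↦ (M n / n : ℝ)) atTop (𝓝 t)) :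
    Tendsto (fun n ↦ (∑ j ∈ Finset.range (M n), h n j) / n) atTop (𝓝 (∫ s in 0..t, H s)) := by
  have ht : 0 ≤ t := ge_of_tendsto' hM fun n ↦ by positivity
  have hdom : Tendsto (fun n : ℕ ↦ ∫ s in 0..t, h n ⌊n * s⌋₊) atTop (𝓝 (∫ s in 0..t, H s)) := by
    refine intervalIntegral.tendsto_integral_filter_of_dominated_convergence (fun _ ↦ C)
      (.of_forall fun n ↦ (measurable_comp_floor_mul (h n) n).aestronglyMeasurable) ?_
      intervalIntegrable_const (.of_forall fun s hs ↦ ?_)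
    · filter_upwards [hC] with n hn
      exact .of_forall fun s _ ↦ hn _
    · exact hH s (uIoc_of_le ht ▸ hs).1.le
  have htail : Tendsto (fun n : ℕ ↦ ∫ s in t..(M n / n : ℝ), h n ⌊n * s⌋₊) atTop (𝓝 0) := by
    have hbound : Tendsto (fun n ↦ C * |(M n / n : ℝ) - t|) atTop (𝓝 0) := by
      simpa using (hM.sub_const t).abs.const_mul C
    refine squeeze_zero_norm' ?_ hbound
    filter_upwards [hC] with n hn
    exact intervalIntegral.norm_integral_le_of_norm_le_const fun s _ ↦ hn _
  refine (by simpa using hdom.add htail : Tendsto _ _ _).congr' ?_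
  filter_upwards [hC, eventually_gt_atTop 0] with n hCn hn
  have hint (b c : ℝ) : IntervalIntegrable (fun s : ℝ ↦ h n ⌊n * s⌋₊) volume b c :=
    (intervalIntegrable_const (c := C)).mono_fun'
      (measurable_comp_floor_mul (h n) n).aestronglyMeasurable (.of_forall fun s ↦ hCn _)
  rw [sum_range_div_eq_integral_floor _ hn,
    intervalIntegral.integral_add_adjacent_intervals (hint _ _) (hint _ _)]

end RiemannSums

section ExponentialLimit

lemma tendsto_measureReal_of_tendsto_charFun {μ : ℕ → Measure ℝ} {ν : Measure ℝ}
    [IsProbabilityMeasure ν] (hμ : ∀ᶠ n in atTop, IsProbabilityMeasure (μ n))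
    (hchar : ∀ u, Tendsto (fun n ↦ charFun (μ n) u) atTop (𝓝 (charFun ν u))) {E : Set ℝ}
    (hE : ν (frontier E) = 0) : Tendsto (fun n ↦ (μ n).real E) atTop (𝓝 (ν.real E)) := by
  obtain ⟨N, hN⟩ := eventually_atTop.mp hμ
  let μ' (n : ℕ) : ProbabilityMeasure ℝ := ⟨μ (n + N), hN _ (Nat.le_add_left N n)⟩
  have hweak : Tendsto μ' atTop (𝓝 ⟨ν, inferInstance⟩) :=
    ProbabilityMeasure.tendsto_iff_tendsto_charFun.mpr fun u ↦
      (tendsto_add_atTop_iff_nat N).mpr (hchar u)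
  refine (tendsto_add_atTop_iff_nat N).mp ((ENNReal.tendsto_toReal (measure_ne_top ν E)).comp ?_)
  exact ProbabilityMeasure.tendsto_measure_of_null_frontier_of_tendsto' hweak hE

variable {φ : ℕ → ℝ} (hφ : ∀ i, 0 ≤ φ i) (hφ₀ : φ 0 = 0) (hφs : HasSum φ 1) {m : ℝ}
  (hm : HasSum (fun k : ℕ ↦ k * φ k) m) {a : ℕ → ℝ} {lam : ℝ} (hlam : 0 < lam)
  (haconv : Tendsto (fun n : ℕ ↦ n * (1 - a n)) atTop (𝓝 lam))

include hφ hφ₀ hφs hm in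
lemma mean_pos : 0 < m := by
  refine lt_of_lt_of_le one_pos (hasSum_le (fun k ↦ ?_) hφs hm)
  rcases k.eq_zero_or_pos with rfl | hk
  · simp [hφ₀]
  · exact le_mul_of_one_le_left (hφ k) (by exact_mod_cast hk)

include hlam haconv in
lemma eventually_mem_Ioo_of_tendsto_mul_one_sub : ∀ᶠ n in atTop, a n ∈ Ioo 0 1 := by
  filter_upwards [(tendsto_one_of_tendsto_mul_one_sub haconv).eventually_const_lt one_pos,
    haconv.eventually_const_lt hlam] with n hpos hlt
  exact ⟨hpos, sub_pos.mp (pos_of_mul_pos_right hlt n.cast_nonneg)⟩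

include hφ hφ₀ hφs hm hlam haconv in
lemma tendsto_charFun_latticeLaw_psiSeq (u : ℝ) :
    Tendsto (fun n ↦ charFun (latticeLaw (fun k ↦ (1 - a n) * psiSeq (a n) φ k) n) u) atTop
      (𝓝 (charFun (expMeasure (lam / m)) u)) := by
  have hm₀ := mean_pos hφ hφ₀ hφs hm
  have hden : (lam - m * u * Complex.I : ℂ) ≠ 0 := fun h ↦ hlam.ne' (by
    simpa using congr(Complex.re $h))
  have hquot := ((Complex.continuous_ofReal.tendsto lam).comp haconv).div
    (tendsto_mul_one_sub_fourierSeq hφs hm haconv u) hden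
  have hlimit : charFun (expMeasure (lam / m)) u = lam / (lam - m * u * Complex.I) := by
    have : (m : ℂ) ≠ 0 := by exact_mod_cast hm₀.ne'
    rw [charFun_expMeasure (div_pos hlam hm₀), ← mul_div_mul_left _ _ this]
    push_cast
    congr 1 <;> field_simp
  rw [hlimit]
  refine hquot.congr' ?_
  filter_upwards [eventually_mem_Ioo_of_tendsto_mul_one_sub hlam haconv, eventually_ne_atTop 0]
    with n ⟨ha₀, ha₁⟩ hn
  rw [charFun_latticeLaw fun k ↦ mul_nonneg (sub_nonneg.mpr ha₁.le) (psiSeq_nonneg ha₀.le hφ k),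
    fourierSeq_const_mul, fourierSeq_psiSeq ha₀.le ha₁ hφ hφ₀ hφs, ← div_eq_mul_inv,
    Pi.div_apply, Function.comp_apply, Complex.ofReal_mul, Complex.ofReal_natCast,
    mul_div_mul_left _ _ (Nat.cast_ne_zero.mpr hn)]

include hφ hφ₀ hφs hm hlam haconv in
lemma tendsto_sum_one_sub_mul_psiSeq {s : ℝ} (hs : 0 ≤ s) :
    Tendsto (fun n : ℕ ↦ ∑ k ∈ Finset.range (⌊n * s⌋₊ + 1), (1 - a n) * psiSeq (a n) φ k) atTop
      (𝓝 (1 - Real.exp (-(lam / m) * s))) := by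
  have hr := div_pos hlam (mean_pos hφ hφ₀ hφs hm)
  have := isProbabilityMeasure_expMeasure hr
  have hae := eventually_mem_Ioo_of_tendsto_mul_one_sub hlam haconv
  have hnn : ∀ᶠ n in atTop, ∀ k, 0 ≤ (1 - a n) * psiSeq (a n) φ k := by
    filter_upwards [hae] with n ⟨ha₀, ha₁⟩ k
    exact mul_nonneg (sub_nonneg.mpr ha₁.le) (psiSeq_nonneg ha₀.le hφ k)
  have hprob : ∀ᶠ n in atTop,
      IsProbabilityMeasure (latticeLaw (fun k ↦ (1 - a n) * psiSeq (a n) φ k) n) := by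
    filter_upwards [hae, hnn] with n ⟨ha₀, ha₁⟩ hnn
    exact isProbabilityMeasure_latticeLaw hnn (hasSum_one_sub_mul_psiSeq ha₀.le ha₁ hφ hφ₀ hφs) n
  have hfrontier : expMeasure (lam / m) (frontier (Iic s)) = 0 := by
    rw [frontier_Iic]
    exact withDensity_absolutelyContinuous _ _ Real.volume_singleton
  have hcdf : (expMeasure (lam / m)).real (Iic s) = 1 - Real.exp (-(lam / m) * s) := by
    rw [← cdf_eq_real, cdf_expMeasure_eq hr, if_pos hs, neg_mul]
  rw [← hcdf]
  refine (tendsto_measureReal_of_tendsto_charFun hprob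
    (tendsto_charFun_latticeLaw_psiSeq hφ hφ₀ hφs hm hlam haconv) hfrontier).congr' ?_
  filter_upwards [hnn, eventually_gt_atTop 0] with n hnn hn
  exact latticeLaw_real_Iic hnn hn hs

include hφ hφ₀ hφs hm hlam haconv in
lemma tendsto_donskerWeight {θ : ℕ → ℝ} (hθ : ∀ n, θ n ∈ Icc 0 1) {s : ℝ} (hs : 0 ≤ s) :
    Tendsto (fun n : ℕ ↦ donskerWeight (a n) φ (θ n) ⌊n * s⌋₊) atTop
      (𝓝 (1 - Real.exp (-(lam / m) * s))) := by
  have ha := tendsto_one_of_tendsto_mul_one_sub haconv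
  have hgap : Tendsto (fun n ↦ 1 - a n) atTop (𝓝 0) := by simpa using ha.const_sub 1
  refine (tendsto_sum_one_sub_mul_psiSeq hφ hφ₀ hφs hm hlam haconv hs).congr_dist
    (squeeze_zero' (.of_forall fun _ ↦ dist_nonneg) ?_ hgap)
  filter_upwards [eventually_mem_Ioo_of_tendsto_mul_one_sub hlam haconv] with n ⟨ha₀, ha₁⟩
  rw [dist_comm, Real.dist_eq]
  exact abs_donskerWeight_sub_le ha₀.le ha₁.le hφ hφ₀ hφs (hθ n) _

include hφ hφ₀ hφs hlam haconv in
lemma eventually_donskerWeight_mem_Icc {θ : ℕ → ℝ} (hθ : ∀ n, θ n ∈ Icc 0 1) :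
    ∀ᶠ n in atTop, ∀ j, donskerWeight (a n) φ (θ n) j ∈ Icc 0 1 := by
  filter_upwards [eventually_mem_Ioo_of_tendsto_mul_one_sub hlam haconv] with n ⟨ha₀, ha₁⟩ j
  exact ⟨donskerWeight_nonneg ha₀.le ha₁.le hφ (hθ n).1 j,
    donskerWeight_le_one ha₀.le ha₁.le hφ hφ₀ hφs (hθ n).2 j⟩

include hφ hφ₀ hφs hlam haconv in
lemma eventually_abs_inv_sqrt_mul_donskerWeight_lt {θ : ℕ → ℝ} (hθ : ∀ n, θ n ∈ Icc 0 1) {δ : ℝ}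
    (hδ : 0 < δ) : ∀ᶠ n : ℕ in atTop, ∀ j, |(√n)⁻¹ * donskerWeight (a n) φ (θ n) j| < δ := by
  have hsqrt : Tendsto (fun n : ℕ ↦ (√n)⁻¹) atTop (𝓝 0) :=
    tendsto_inv_atTop_zero.comp (Real.tendsto_sqrt_atTop.comp tendsto_natCast_atTop_atTop)
  filter_upwards [hsqrt.eventually_lt_const hδ,
    eventually_donskerWeight_mem_Icc hφ hφ₀ hφs hlam haconv hθ] with n hn hw j
  rw [abs_of_nonneg (mul_nonneg (by positivity) (hw j).1)]
  exact (mul_le_of_le_one_right (by positivity) (hw j).2).trans_lt hn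

lemma tendsto_floor_mul_add_two_div {t : ℝ} (ht : 0 ≤ t) :
    Tendsto (fun n : ℕ ↦ ((⌊n * t⌋₊ + 2 : ℕ) / n : ℝ)) atTop (𝓝 t) := by
  have hfloor := (tendsto_nat_floor_mul_div_atTop ht).comp (tendsto_natCast_atTop_atTop (R := ℝ))
  have htwo : Tendsto (fun n : ℕ ↦ (2 / n : ℝ)) atTop (𝓝 0) :=
    tendsto_const_nhds.div_atTop tendsto_natCast_atTop_atTop
  simpa [add_div, mul_comm t] using hfloor.add htwo

include hφ hφ₀ hφs hm hlam haconv in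
lemma tendsto_sum_sq_inv_sqrt_mul_donskerWeight {θ : ℕ → ℝ} (hθ : ∀ n, θ n ∈ Icc 0 1) {t : ℝ}
    (ht : 0 ≤ t) :
    Tendsto (fun n : ℕ ↦ ∑ k ∈ Finset.range (⌊n * t⌋₊ + 2),
        ((√n)⁻¹ * donskerWeight (a n) φ (θ n) (⌊n * t⌋₊ + 1 - k)) ^ 2) atTop
      (𝓝 (∫ s in 0..t, (1 - Real.exp (-(lam / m) * (t - s))) ^ 2)) := by
  have hbound : ∀ᶠ n in atTop, ∀ j, |donskerWeight (a n) φ (θ n) j ^ 2| ≤ 1 := by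
    filter_upwards [eventually_donskerWeight_mem_Icc hφ hφ₀ hφs hlam haconv hθ] with n hw j
    rw [abs_of_nonneg (sq_nonneg _)]
    exact pow_le_one₀ (hw j).1 (hw j).2
  have hriemann := tendsto_sum_range_div_integral hbound
    (fun s hs ↦ (tendsto_donskerWeight hφ hφ₀ hφs hm hlam haconv hθ hs).pow 2)
    (tendsto_floor_mul_add_two_div ht)
  rw [intervalIntegral.integral_comp_sub_left
    (fun s ↦ (1 - Real.exp (-(lam / m) * s)) ^ 2), sub_self, sub_zero]
  refine hriemann.congr fun n ↦ ?_
  rw [← Finset.sum_range_reflect, Finset.sum_div]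
  refine Finset.sum_congr rfl fun k _ ↦ ?_
  rw [mul_pow, inv_pow, Real.sq_sqrt n.cast_nonneg, inv_mul_eq_div, Nat.add_sub_assoc (by simp)]

end ExponentialLimit

section WeightedCLT

open Asymptotics

lemma norm_prod_sub_prod_le_sum {ι R : Type*} [NormedCommRing R] [NormOneClass R] (s : Finset ι)
    {z w : ι → R} (hz : ∀ i ∈ s, ‖z i‖ ≤ 1) (hw : ∀ i ∈ s, ‖w i‖ ≤ 1) :
    ‖∏ i ∈ s, z i - ∏ i ∈ s, w i‖ ≤ ∑ i ∈ s, ‖z i - w i‖ := by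
  classical
  induction s using Finset.induction_on with
  | empty => simp
  | insert i s hi ih =>
    simp only [Finset.forall_mem_insert] at hz hw
    have hprod : ‖∏ j ∈ s, z j‖ ≤ 1 :=
      (Finset.norm_prod_le _ _).trans (Finset.prod_le_one (fun _ _ ↦ norm_nonneg _) hz.2)
    rw [Finset.prod_insert hi, Finset.prod_insert hi, Finset.sum_insert hi]
    calc ‖z i * ∏ j ∈ s, z j - w i * ∏ j ∈ s, w j‖
        = ‖(z i - w i) * ∏ j ∈ s, z j + w i * (∏ j ∈ s, z j - ∏ j ∈ s, w j)‖ := by ring_nf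
      _ ≤ ‖z i - w i‖ * ‖∏ j ∈ s, z j‖ + ‖w i‖ * ‖∏ j ∈ s, z j - ∏ j ∈ s, w j‖ :=
          (norm_add_le _ _).trans (add_le_add (norm_mul_le _ _) (norm_mul_le _ _))
      _ ≤ ‖z i - w i‖ * 1 + 1 * ∑ j ∈ s, ‖z j - w j‖ := by
          gcongr
          · exact hw.1
          · exact ih hz.2 hw.2
      _ = ‖z i - w i‖ + ∑ j ∈ s, ‖z j - w j‖ := by ring

lemma norm_exp_neg_sq_div_two_le_one (x : ℝ) : ‖Complex.exp (-(x ^ 2 / 2 : ℝ))‖ ≤ 1 := by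
  rw [← Complex.ofReal_neg, Complex.norm_exp_ofReal, Real.exp_le_one_iff]
  linarith [sq_nonneg x]

lemma exp_neg_sq_div_two_sub_isLittleO :
    (fun x : ℝ ↦ Complex.exp (-(x ^ 2 / 2 : ℝ)) - (1 - (x ^ 2 / 2 : ℝ))) =o[𝓝 0]
      fun x ↦ x ^ 2 := by
  have hlim : Tendsto (fun x : ℝ ↦ -((x ^ 2 / 2 : ℝ) : ℂ)) (𝓝 0) (𝓝 0) := by
    have : Continuous fun x : ℝ ↦ -((x ^ 2 / 2 : ℝ) : ℂ) := by fun_prop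
    simpa using this.tendsto 0
  have hexp := (hasDerivAt_iff_isLittleO_nhds_zero.mp (Complex.hasDerivAt_exp 0)).comp_tendsto hlim
  refine (hexp.congr_left fun x ↦ ?_).trans_isBigO (.of_bound 1 (.of_forall fun x ↦ ?_))
  · simp only [Function.comp_apply, zero_add, Complex.exp_zero, smul_eq_mul, mul_one]
    ring
  · simp only [Function.comp_apply, norm_neg, Complex.norm_real, Real.norm_eq_abs, abs_div, abs_pow]
    rw [abs_two]
    linarith [sq_nonneg |x|]

lemma tendsto_prod_of_isLittleO_sub_gaussian {α ι : Type*} {l : Filter α} {f : ℝ → ℂ}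
    (hf : ∀ x, ‖f x‖ ≤ 1)
    (hf₀ : (fun x ↦ f x - Complex.exp (-(x ^ 2 / 2 : ℝ))) =o[𝓝 0] fun x ↦ x ^ 2)
    {s : α → Finset ι} {x : α → ι → ℝ} {v : ℝ}
    (hx : ∀ δ > 0, ∀ᶠ n in l, ∀ k ∈ s n, |x n k| < δ)
    (hv : Tendsto (fun n ↦ ∑ k ∈ s n, x n k ^ 2) l (𝓝 v)) :
    Tendsto (fun n ↦ ∏ k ∈ s n, f (x n k)) l (𝓝 (Complex.exp (-(v / 2 : ℝ)))) := by
  set g : ℝ → ℂ := fun x ↦ Complex.exp (-(x ^ 2 / 2 : ℝ))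
  have hgauss : Tendsto (fun n ↦ ∏ k ∈ s n, g (x n k)) l (𝓝 (Complex.exp (-(v / 2 : ℝ)))) := by
    have hprod (n : α) : ∏ k ∈ s n, g (x n k) =
        Complex.exp (-((∑ k ∈ s n, x n k ^ 2) / 2 : ℝ)) := by
      rw [← Complex.exp_sum, Finset.sum_neg_distrib, Finset.sum_div, Complex.ofReal_sum]
    simp only [hprod]
    have : Continuous fun r : ℝ ↦ Complex.exp (-(r / 2 : ℝ)) := by fun_prop
    exact (this.tendsto v).comp hv
  have hdiff : (fun n ↦ ∏ k ∈ s n, f (x n k) - ∏ k ∈ s n, g (x n k)) =o[l]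
      fun n ↦ ∑ k ∈ s n, x n k ^ 2 := by
    refine isLittleO_iff.mpr fun c hc ↦ ?_
    obtain ⟨δ, hδ, hball⟩ := Metric.eventually_nhds_iff.mp (isLittleO_iff.mp hf₀ hc)
    filter_upwards [hx δ hδ] with n hn
    calc ‖∏ k ∈ s n, f (x n k) - ∏ k ∈ s n, g (x n k)‖
        ≤ ∑ k ∈ s n, ‖f (x n k) - g (x n k)‖ :=
          norm_prod_sub_prod_le_sum _ (fun _ _ ↦ hf _) fun _ _ ↦ norm_exp_neg_sq_div_two_le_one _
      _ ≤ ∑ k ∈ s n, c * ‖x n k ^ 2‖ := Finset.sum_le_sum fun k hk ↦ hball (by simpa using hn k hk)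
      _ = c * ‖∑ k ∈ s n, x n k ^ 2‖ := by
          rw [← Finset.mul_sum, Real.norm_of_nonneg (Finset.sum_nonneg fun _ _ ↦ sq_nonneg _)]
          simp only [Real.norm_of_nonneg (sq_nonneg _)]
  simpa using (isLittleO_one_iff ℝ |>.mp (hdiff.trans_isBigO (hv.isBigO_one ℝ))).add hgauss

variable {Ω Ω' : Type*} {mΩ : MeasurableSpace Ω} {mΩ' : MeasurableSpace Ω'} {P : Measure Ω}
  {X : ℕ → Ω → ℝ}

lemma charFun_map_weighted_sum (hindep : iIndepFun X P)
    (hident : ∀ i, IdentDistrib (X i) (X 0) P P) (s : Finset ℕ) (w : ℕ → ℝ) (u : ℝ) :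
    charFun (P.map fun ω ↦ ∑ k ∈ s, w k * X k ω) u =
      ∏ k ∈ s, charFun (P.map (X 0)) (w k * u) := by
  have hwX : iIndepFun (fun k ω ↦ w k * X k ω) P :=
    hindep.comp (fun k x ↦ w k * x) fun k ↦ measurable_const_mul _
  rw [(hwX.restrict s).charFun_map_fun_finsetSum_eq_prod
    fun k _ ↦ (hident k).aemeasurable_fst.const_mul _, Finset.prod_apply]
  refine Finset.prod_congr rfl fun k _ ↦ ?_
  rw [charFun_map_mul_comp (hident k).aemeasurable_fst, (hident k).map_eq]

variable [IsProbabilityMeasure P]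

lemma charFun_sub_gaussian_isLittleO {X : Ω → ℝ} (hX : AEMeasurable X P) (h0 : P[X] = 0)
    (h1 : P[X ^ 2] = 1) :
    (fun u : ℝ ↦ charFun (P.map X) u - Complex.exp (-(u ^ 2 / 2 : ℝ))) =o[𝓝 0]
      fun u ↦ u ^ 2 := by
  refine ((taylor_charFun_two hX h0 h1).sub exp_neg_sq_div_two_sub_isLittleO).congr_left
    fun u ↦ ?_
  push_cast
  ring

theorem tendstoInDistribution_weighted_sum {P' : Measure Ω'} [IsProbabilityMeasure P']
    {Y : Ω' → ℝ} {v : NNReal} (hY : HasLaw Y (gaussianReal 0 v) P')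
    (h0 : P[X 0] = 0) (h1 : P[X 0 ^ 2] = 1)
    (hindep : iIndepFun X P) (hident : ∀ i, IdentDistrib (X i) (X 0) P P)
    {s : ℕ → Finset ℕ} {w : ℕ → ℕ → ℝ} (hw : ∀ δ > 0, ∀ᶠ n in atTop, ∀ k ∈ s n, |w n k| < δ)
    (hv : Tendsto (fun n ↦ ∑ k ∈ s n, w n k ^ 2) atTop (𝓝 v)) :
    TendstoInDistribution (fun n ω ↦ ∑ k ∈ s n, w n k * X k ω) atTop Y (fun _ ↦ P) P' where
  forall_aemeasurable n :=
    Finset.aemeasurable_fun_sum _ fun k _ ↦ (hident k).aemeasurable_fst.const_mul _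
  tendsto := by
    refine ProbabilityMeasure.tendsto_iff_tendsto_charFun.mpr fun u ↦ ?_
    rw! [hY.map_eq]
    have := Measure.isProbabilityMeasure_map (hident 0).aemeasurable_fst
    have hsmall : ∀ δ > 0, ∀ᶠ n in atTop, ∀ k ∈ s n, |w n k * u| < δ := fun δ hδ ↦ by
      filter_upwards [hw (δ / (|u| + 1)) (by positivity)] with n hn k hk
      rw [abs_mul]
      have := (lt_div_iff₀ (by positivity)).mp (hn k hk)
      nlinarith [abs_nonneg (w n k)]
    have hsq : Tendsto (fun n ↦ ∑ k ∈ s n, (w n k * u) ^ 2) atTop (𝓝 (v * u ^ 2)) := by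
      simpa only [mul_pow, Finset.sum_mul] using hv.mul_const (u ^ 2)
    have hprod := tendsto_prod_of_isLittleO_sub_gaussian (fun _ ↦ norm_charFun_le_one _)
      (charFun_sub_gaussian_isLittleO (hident 0).aemeasurable_fst h0 h1) hsmall hsq
    simpa [charFun_map_weighted_sum hindep hident, charFun_gaussianReal] using hprod

lemma integral_comp_tendsto_of_tendstoInDistribution {P' : Measure Ω'} [IsProbabilityMeasure P']
    {E : Type*} [TopologicalSpace E] [MeasurableSpace E] [OpensMeasurableSpace E]
    {α : Type*} {l : Filter α} {X : α → Ω → E} {Y : Ω' → E}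
    (h : TendstoInDistribution X l Y (fun _ ↦ P) P') (f : BoundedContinuousFunction E ℝ) :
    Tendsto (fun n ↦ ∫ ω, f (X n ω) ∂P) l (𝓝 (∫ ω, f (Y ω) ∂P')) := by
  have hint := ProbabilityMeasure.tendsto_iff_forall_integral_tendsto.mp h.tendsto f
  have hf {μ : Measure E} : AEStronglyMeasurable f μ :=
    f.continuous.measurable.aestronglyMeasurable
  simpa only [ProbabilityMeasure.coe_mk, integral_map (h.forall_aemeasurable _) hf,
    integral_map h.aemeasurable_limit hf] using hint

end WeightedCLT

lemma sub_floor_mem_Icc {x : ℝ} (hx : 0 ≤ x) : x - ⌊x⌋₊ ∈ Icc 0 1 :=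
  ⟨sub_nonneg.mpr (Nat.floor_le hx), by linarith [Nat.lt_floor_add_one x]⟩

theorem donsker_line_marginal_light_tail_general
    {Ω : Type*} [MeasurableSpace Ω] (P : Measure Ω) [IsProbabilityMeasure P]
    (φ : ℕ → ℝ) (hφnn : ∀ i, 0 ≤ φ i) (hφ0 : φ 0 = 0) (hφsum : ∑' i : ℕ, φ i = 1)
    (m : ℝ) (hm : HasSum (fun i : ℕ => (i : ℝ) * φ i) m)
    (a : ℕ → ℝ) (lam : ℝ) (hlam : 0 < lam)
    (haconv : Tendsto (fun n : ℕ => (n : ℝ) * (1 - a n)) atTop (𝓝 lam))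
    (ε : ℕ → Ω → ℝ) (hεindep : iIndepFun ε P) (hεid : ∀ k, IdentDistrib (ε k) (ε 0) P P)
    (hεmean : P[ε 0] = 0) (hεvar : P[ε 0 ^ 2] = 1)
    (y : ℕ → ℕ → Ω → ℝ) (hy0 : ∀ n, y n 0 = ε 0)
    (hyrec : ∀ n k, 1 ≤ k → ∀ ω,
      y n k ω = ε k ω + ∑ i ∈ Finset.Icc 1 k, a n * φ i * y n (k - i) ω)
    (Z : ℕ → ℝ → Ω → ℝ)
    (hZ : ∀ n t ω, Z n t ω = (1 - a n) / Real.sqrt n *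
      ((∑ j ∈ Finset.range (⌊(n : ℝ) * t⌋₊ + 1), y n j ω) +
        ((n : ℝ) * t - (⌊(n : ℝ) * t⌋₊ : ℝ)) * y n (⌊(n : ℝ) * t⌋₊ + 1) ω))
    (t : ℝ) (ht : 0 ≤ t) :
    TendstoInDistribution (fun n ↦ Z n t) atTop id (fun _ ↦ P)
      (gaussianReal 0 (∫ s in 0..t, (1 - Real.exp (-(lam / m) * (t - s))) ^ 2).toNNReal) := by
  have hφsummable : Summable φ := of_not_not fun h ↦ by
    simp [tsum_eq_zero_of_not_summable h] at hφsum
  have hφs : HasSum φ 1 := hφsum ▸ hφsummable.hasSum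
  have hθ (n : ℕ) : (n * t - ⌊n * t⌋₊ : ℝ) ∈ Icc 0 1 := sub_floor_mem_Icc (by positivity)
  have hv : 0 ≤ ∫ s in 0..t, (1 - Real.exp (-(lam / m) * (t - s))) ^ 2 :=
    intervalIntegral.integral_nonneg ht fun _ _ ↦ sq_nonneg _
  have hmoving (n : ℕ) : Z n t = fun ω ↦ ∑ k ∈ Finset.range (⌊n * t⌋₊ + 2),
      (√n)⁻¹ * donskerWeight (a n) φ (n * t - ⌊n * t⌋₊) (⌊n * t⌋₊ + 1 - k) * ε k ω := by
    ext ω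
    rw [hZ, div_mul_eq_mul_div, interpolated_sum_eq_sum_donskerWeight hφ0 (e := fun k ↦ ε k ω)
      (congrFun (hy0 n) ω) fun k hk ↦ hyrec n k hk ω, div_eq_inv_mul, Finset.mul_sum]
    simp only [mul_assoc]
  simp only [hmoving]
  refine tendstoInDistribution_weighted_sum .id hεmean hεvar hεindep hεid (fun δ hδ ↦ ?_) ?_
  · filter_upwards [eventually_abs_inv_sqrt_mul_donskerWeight_lt hφnn hφ0 hφs hlam haconv hθ hδ]
      with n hn k _ using hn _
  · rw [Real.coe_toNNReal _ hv]
    exact tendsto_sum_sq_inv_sqrt_mul_donskerWeight hφnn hφ0 hφs hm hlam haconv hθ ht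

/-- one-dimensional marginal convergence in the light-tail case:
`Z^n_t` converges in distribution to a centered Gaussian with variance
`∫_0^t (1 − e^{−(λ/m)(t−s)})² ds`. -/
theorem donsker_line_marginal_light_tail
    {Ω : Type*} [MeasurableSpace Ω] (P : Measure Ω) [IsProbabilityMeasure P]
    (φ : ℕ → ℝ) (hφnn : ∀ i, 0 ≤ φ i) (hφ0 : φ 0 = 0) (hφsum : ∑' i : ℕ, φ i = 1)
    (m : ℝ) (hm : HasSum (fun i : ℕ => (i : ℝ) * φ i) m)
    (a : ℕ → ℝ) (ha : ∀ n, 1 ≤ n → 0 < a n ∧ a n < 1)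
    (lam : ℝ) (hlam : 0 < lam)
    (haconv : Tendsto (fun n : ℕ => (n : ℝ) * (1 - a n)) atTop (nhds lam))
    -- the `ε_k` are iid, square integrable, centered with unit variance
    (ε : ℕ → Ω → ℝ) (hεmeas : ∀ k, Measurable (ε k))
    (hεindep : iIndepFun ε P)
    (hεid : ∀ k, Measure.map (ε k) P = Measure.map (ε 0) P)
    (hεL2 : MemLp (ε 0) 2 P)
    (hεmean : ∫ ω, ε 0 ω ∂P = 0)
    (hεvar : ∫ ω, (ε 0 ω) ^ 2 ∂P = 1)
    (y : ℕ → ℕ → Ω → ℝ)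
    (hy0 : ∀ n, y n 0 = ε 0)
    (hyrec : ∀ n k, 1 ≤ k → ∀ ω,
      y n k ω = ε k ω + ∑ i ∈ Finset.Icc 1 k, a n * φ i * y n (k - i) ω)
    -- the renormalized Donsker line
    (Z : ℕ → ℝ → Ω → ℝ)
    (hZ : ∀ n t ω, Z n t ω = (1 - a n) / Real.sqrt n *
      ((∑ j ∈ Finset.range (⌊(n : ℝ) * t⌋₊ + 1), y n j ω) +
        ((n : ℝ) * t - (⌊(n : ℝ) * t⌋₊ : ℝ)) * y n (⌊(n : ℝ) * t⌋₊ + 1) ω))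
    : ∀ t ∈ Set.Icc (0:ℝ) 1, ∀ f : BoundedContinuousFunction ℝ ℝ,
        Tendsto (fun n : ℕ => ∫ ω, f (Z n t ω) ∂P) atTop
          (nhds (∫ x, f x ∂(gaussianReal 0
            (Real.toNNReal (∫ s in (0:ℝ)..t,
              (1 - Real.exp (-(lam / m) * (t - s))) ^ 2))))) :=
  fun t ht ↦ integral_comp_tendsto_of_tendstoInDistribution <|
    donsker_line_marginal_light_tail_general P φ hφnn hφ0 hφsum m hm a lam hlam haconv ε hεindep
      (fun k ↦ ⟨(hεmeas k).aemeasurable, (hεmeas 0).aemeasurable, hεid k⟩) hεmean hεvar y hy0 hyrec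
      Z hZ t ht.1
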